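/- arXiv:2507.11738 — 2 statements merged into one kernel-verified Lean document; each statement's English description precedes it below -/
import Mathlib

section
/- Let e, m, n be natural numbers with 2 ≤ m < n ≤ e − 2 and (m, n) ≠ (2, 3). Then the genus of S_{e,m,n}, i.e., the cardinality of the finite set ℕ \ S_{e,m,n}, equals e + 1. -/
/-!
The gaps of `S_{e,m,n}` are exactly `1, …, e - 1, e + m, e + n`. These are gaps because a nonzero
element of the semigroup is either a generator or a sum of at least two generators, hence at least
`2e`. Conversely every `s` with `2e ≤ s < 3e` is a sum of two generators: for `s = 2e + k` with
`k ≠ m, n` use `e + (e + k)`, and for `k ∈ {m, n}` use `(e + 1) + (e + k - 1)`, except that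
`k = n = m + 1` requires `(e + 2) + (e + n - 2)`, which is where `(m, n) ≠ (2, 3)` is needed.
Adding multiples of `e` then reaches everything from `2e` on.
-/

/-- The Sally type numerical semigroup `S_{e,m,n}`: the additive submonoid of `ℕ`
generated by `{e + i : 0 ≤ i ≤ e - 1, i ≠ m, i ≠ n}`. -/
def sallySemigroup (e m n : ℕ) : AddSubmonoid ℕ :=
  AddSubmonoid.closure {s : ℕ | ∃ i : ℕ, i ≤ e - 1 ∧ i ≠ m ∧ i ≠ n ∧ s = e + i}

theorem mem_sally_of_generator {e m n i : ℕ} (h : i ≤ e - 1) (h1 : i ≠ m) (h2 : i ≠ n) :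
    e + i ∈ sallySemigroup e m n :=
  AddSubmonoid.subset_closure ⟨i, h, h1, h2, rfl⟩

theorem mem_sally_of_two_mul_le {e m n : ℕ} (hm : 2 ≤ m) (hmn : m < n) (hn : n ≤ e - 2)
    (hne : ¬(m = 2 ∧ n = 3)) (s : ℕ) (hs : 2 * e ≤ s) : s ∈ sallySemigroup e m n := by
  induction s using Nat.strong_induction_on with
  | _ s ih =>
  -- It suffices to split `s` into two generators.
  have key : ∀ i j : ℕ, i ≤ e - 1 → i ≠ m → i ≠ n → j ≤ e - 1 → j ≠ m → j ≠ n →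
      s = (e + i) + (e + j) → s ∈ sallySemigroup e m n := by
    rintro i j hi him hin hj hjm hjn rfl
    exact add_mem (mem_sally_of_generator hi him hin) (mem_sally_of_generator hj hjm hjn)
  by_cases h3 : 3 * e ≤ s
  · have he : e + 0 ∈ sallySemigroup e m n :=
      mem_sally_of_generator (by omega) (by omega) (by omega)
    have h := add_mem he (ih (s - e) (by omega) (by omega))
    rwa [show e + 0 + (s - e) = s by omega] at h
  · obtain ⟨k, rfl⟩ := Nat.exists_eq_add_of_le hs
    by_cases hk : k ≠ m ∧ k ≠ n
    · apply key 0 k <;> omega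
    · by_cases hk1 : k = m + 1
      · apply key 2 (k - 2) <;> omega
      · apply key 1 (k - 1) <;> omega

theorem mem_sally_iff {e m n : ℕ} (hm : 2 ≤ m) (hmn : m < n) (hn : n ≤ e - 2)
    (hne : ¬(m = 2 ∧ n = 3)) (s : ℕ) :
    s ∈ sallySemigroup e m n ↔ s = 0 ∨ (e ≤ s ∧ s ≠ e + m ∧ s ≠ e + n) := by
  constructor
  · intro h
    unfold sallySemigroup at h
    induction h using AddSubmonoid.closure_induction with
    | mem x hx =>
      obtain ⟨i, hi, h1, h2, rfl⟩ := hx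
      omega
    | zero => exact Or.inl rfl
    | add x y _ _ hx hy => omega
  · rintro (rfl | ⟨h1, h2, h3⟩)
    · exact zero_mem _
    · by_cases h : 2 * e ≤ s
      · exact mem_sally_of_two_mul_le hm hmn hn hne s h
      · obtain ⟨i, rfl⟩ := Nat.exists_eq_add_of_le h1
        apply mem_sally_of_generator <;> omega

theorem stmt_4 (e m n : ℕ) (hm : 2 ≤ m) (hmn : m < n) (hn : n ≤ e - 2)
    (hne : ¬(m = 2 ∧ n = 3)) :
    {s : ℕ | s ∉ sallySemigroup e m n}.ncard = e + 1 := by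
  have h : {s : ℕ | s ∉ sallySemigroup e m n}
      = ((insert (e + m) (insert (e + n) (Finset.Ico 1 e)) : Finset ℕ) : Set ℕ) := by
    ext s
    simp only [Set.mem_ofPred_eq, mem_sally_iff hm hmn hn hne, Finset.mem_coe, Finset.mem_insert,
      Finset.mem_Ico]
    omega
  rw [h, Set.ncard_coe_finset, Finset.card_insert_of_notMem, Finset.card_insert_of_notMem,
    Nat.card_Ico]
  · omega
  · simp only [Finset.mem_Ico]
    omega
  · simp only [Finset.mem_insert, Finset.mem_Ico]
    omega
end

section
/- Let e, m, n be natural numbers with 2 ≤ m < n ≤ e − 2 and (m, n) ≠ (2, 3). Let λ = 2e + 2 + x with 0 ≤ x ≤ 2e − 4, and let j be a natural number with j ≤ e − 1, j ≠ m, j ≠ n. Then λ − (e + j) ∈ S_{e,m,n} if and only if j ≤ x + 2, j + m ≠ x + 2, and j + n ≠ x + 2. -/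
theorem sally_gen_mem {e m n i : ℕ} (hi : i ≤ e - 1) (him : i ≠ m) (hin : i ≠ n) :
    e + i ∈ sallySemigroup e m n :=
  AddSubmonoid.subset_closure ⟨i, hi, him, hin, rfl⟩

theorem sally_mem_cases {e m n s : ℕ} (hs : s ∈ sallySemigroup e m n) :
    s = 0 ∨ (∃ i, i ≤ e - 1 ∧ i ≠ m ∧ i ≠ n ∧ s = e + i) ∨ 2 * e ≤ s := by
  induction hs using AddSubmonoid.closure_induction with
  | mem s h => exact Or.inr (Or.inl h)
  | zero => exact Or.inl rfl
  | add a b _ _ ha hb =>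
    rcases ha with rfl | ha | ha
    · simpa using hb
    · rcases hb with rfl | hb | hb
      · exact Or.inr (Or.inl (by simpa using ha))
      · obtain ⟨i, -, -, -, rfl⟩ := ha
        obtain ⟨k, -, -, -, rfl⟩ := hb
        right; right; omega
      · right; right; omega
    · right; right; omega

theorem sally_mem_two_mul_add {e m n z : ℕ} (hm : 2 ≤ m) (hmn : m < n)
    (hne : ¬(m = 2 ∧ n = 3)) (hz : z ≤ e - 1) : 2 * e + z ∈ sallySemigroup e m n := by
  obtain ⟨a, b, hab, ha, ham, han, hb, hbm, hbn⟩ : ∃ a b, a + b = z ∧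
      a ≤ e - 1 ∧ a ≠ m ∧ a ≠ n ∧ b ≤ e - 1 ∧ b ≠ m ∧ b ≠ n := by
    by_cases h0 : z ≠ m ∧ z ≠ n
    · exact ⟨0, z, by omega⟩
    by_cases h1 : z - 1 ≠ m
    · exact ⟨1, z - 1, by omega⟩
    -- Here `z = n = m + 1`, and `m ≠ 2` makes `2` an admissible summand.
    · exact ⟨2, z - 2, by omega⟩
  have h := add_mem (sally_gen_mem ha ham han) (sally_gen_mem hb hbm hbn)
  rwa [show e + a + (e + b) = 2 * e + z by omega] at h

theorem stmt_6 (e m n x j : ℕ) (hm : 2 ≤ m) (hmn : m < n) (hn : n ≤ e - 2)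
    (hne : ¬(m = 2 ∧ n = 3)) (hx : x ≤ 2 * e - 4)
    (hj : j ≤ e - 1) (hjm : j ≠ m) (hjn : j ≠ n) :
    (2 * e + 2 + x) - (e + j) ∈ sallySemigroup e m n ↔
      (j ≤ x + 2 ∧ j + m ≠ x + 2 ∧ j + n ≠ x + 2) := by
  constructor
  · intro h
    rcases sally_mem_cases h with h | ⟨i, hi, him, hin, h⟩ | h <;> omega
  · rintro ⟨h1, h2, h3⟩
    by_cases hy : x + 2 - j ≤ e - 1
    · rw [show 2 * e + 2 + x - (e + j) = e + (x + 2 - j) by omega]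
      exact sally_gen_mem hy (by omega) (by omega)
    · rw [show 2 * e + 2 + x - (e + j) = 2 * e + (x + 2 - j - e) by omega]
      exact sally_mem_two_mul_add hm hmn hne (by omega)
end
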